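/- Let g, h, i be the permutations of {0,…,12} given in cycle notation by g = (0 2)(1 7)(3 6)(5 10), h = (0 6)(3 8)(9 5)(2 4), i = (0 5)(9 11)(1 2)(6 12), and g' = (0 7)(3 11)(6 8)(9 12), h' = (0 8)(9 7)(5 11)(1 10), i' = (0 11)(1 8)(2 7)(3 4). Let G be the subgroup of Sym(13) × Sym(13) generated by (g,g'), (h,h'), (i,i'), and let A = {(σ,τ) ∈ G : σ(0) = 0}, B = {(σ,τ) ∈ G : τ(0) = 0}. Then for every (σ,τ) ∈ G the number of fixed points of σ equals the number of fixed points of τ; A and B are Gassmann equivalent subgroups of G of index 13; and A and B are not conjugate in G. -/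

import Mathlib

open Equiv

/-- g = (0 2)(1 7)(3 6)(5 10) -/
def g : Perm (Fin 13) := swap 0 2 * swap 1 7 * swap 3 6 * swap 5 10
/-- h = (0 6)(3 8)(9 5)(2 4) -/
def h : Perm (Fin 13) := swap 0 6 * swap 3 8 * swap 9 5 * swap 2 4
/-- i = (0 5)(9 11)(1 2)(6 12) -/
def i : Perm (Fin 13) := swap 0 5 * swap 9 11 * swap 1 2 * swap 6 12
/-- g' = (0 7)(3 11)(6 8)(9 12) -/
def g' : Perm (Fin 13) := swap 0 7 * swap 3 11 * swap 6 8 * swap 9 12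
/-- h' = (0 8)(9 7)(5 11)(1 10) -/
def h' : Perm (Fin 13) := swap 0 8 * swap 9 7 * swap 5 11 * swap 1 10
/-- i' = (0 11)(1 8)(2 7)(3 4) -/
def i' : Perm (Fin 13) := swap 0 11 * swap 1 8 * swap 2 7 * swap 3 4

/-- The subgroup of Sym(13) × Sym(13) generated by (g,g'), (h,h'), (i,i'). -/
def G₀ : Subgroup (Perm (Fin 13) × Perm (Fin 13)) :=
  Subgroup.closure {(g, g'), (h, h'), (i, i')}

/-- A = {(σ,τ) ∈ G₀ : σ 0 = 0}, the point stabilizer in the first action. -/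
def A : Subgroup G₀ where
  carrier := {g | (g : Perm (Fin 13) × Perm (Fin 13)).1 0 = 0}
  one_mem' := rfl
  mul_mem' := by
    intro x y hx hy
    simp only [Set.mem_setOf_eq] at *
    simp [Subgroup.coe_mul, Perm.mul_apply, hx, hy]
  inv_mem' := by
    intro x hx
    simp only [Set.mem_setOf_eq] at *
    conv_lhs => rw [← hx]
    simp

/-- B = {(σ,τ) ∈ G₀ : τ 0 = 0}, the point stabilizer in the second action. -/
def B : Subgroup G₀ where
  carrier := {g | (g : Perm (Fin 13) × Perm (Fin 13)).2 0 = 0}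
  one_mem' := rfl
  mul_mem' := by
    intro x y hx hy
    simp only [Set.mem_setOf_eq] at *
    simp [Subgroup.coe_mul, Perm.mul_apply, hx, hy]
  inv_mem' := by
    intro x hx
    simp only [Set.mem_setOf_eq] at *
    conv_lhs => rw [← hx]
    simp

/-!
`Fin 13` in the first coordinate carries the points, and in the second the lines, of the projective
plane of order 3 given by the difference set `{0, 1, 3, 9}`; the generators of `G₀` preserve
incidence. The incidence matrix is invertible and intertwines the two permutation representations,
so these have the same character: every element fixes as many points as lines. For transitive
actions, the number of elements of a conjugacy class in a point stabilizer is determined by the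
permutation character, whence `A` and `B` are Gassmann equivalent. They are not conjugate because
the stabilizer of a point fixes no line.
-/

open MulAction Matrix

section Gassmann

/-- Gassmann equivalence: the subgroups have equally many elements in each conjugacy class. The
cardinalities are natural numbers, so an infinite intersection counts as `0`. -/
def IsGassmannEquivalent {G : Type*} [Group G] (H K : Subgroup G) : Prop :=
  ∀ c : G, Nat.card ↥((H : Set G) ∩ conjugatesOf c) = Nat.card ↥((K : Set G) ∩ conjugatesOf c)

variable {G X Y : Type*} [Group G] [MulAction G X] [MulAction G Y]

theorem nonempty_stabilizer_inter_conjugatesOf_equiv [IsPretransitive G X] (c : G) (x y : X) :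
    Nonempty (↥((stabilizer G x : Set G) ∩ conjugatesOf c) ≃
      ↥((stabilizer G y : Set G) ∩ conjugatesOf c)) := by
  obtain ⟨t, rfl⟩ := exists_smul_eq G x y
  refine ⟨(MulAut.conj t).toEquiv.subtypeEquiv fun a => and_congr ?_ ?_⟩
  · simp [mul_smul]
  · have h_conj : IsConj a (t * a * t⁻¹) := isConj_iff.2 ⟨t, rfl⟩
    exact ⟨fun h => h.trans h_conj, fun h => h.trans h_conj.symm⟩

variable (X) in
theorem nonempty_fixedBy_equiv_of_isConj {a b : G} (hab : IsConj a b) :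
    Nonempty (fixedBy X a ≃ fixedBy X b) := by
  obtain ⟨t, rfl⟩ := isConj_iff.1 hab
  exact ⟨(toPerm t).subtypeEquiv fun x => by simp [mul_smul]⟩

/-- Both sides count the pairs of a conjugate of `c` and a point of `X` fixed by it. -/
theorem card_mul_card_stabilizer_inter_conjugatesOf [IsPretransitive G X] (c : G) (x : X) :
    Nat.card X * Nat.card ↥((stabilizer G x : Set G) ∩ conjugatesOf c) =
      Nat.card (conjugatesOf c) * Nat.card (fixedBy X c) := by
  have byPoint (y : X) := (nonempty_stabilizer_inter_conjugatesOf_equiv c x y).some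
  have byElement (a : conjugatesOf c) := (nonempty_fixedBy_equiv_of_isConj X a.2).some
  have swapOrder : (Σ y : X, ↥((stabilizer G y : Set G) ∩ conjugatesOf c)) ≃
      Σ a : conjugatesOf c, fixedBy X (a : G) :=
    { toFun := fun p => ⟨⟨p.2.1, p.2.2.2⟩, ⟨p.1, p.2.2.1⟩⟩
      invFun := fun p => ⟨p.2.1, ⟨p.1.1, p.2.2, p.1.2⟩⟩ }
  rw [← Nat.card_prod, ← Nat.card_prod]
  exact Nat.card_congr <|
    ((Equiv.sigmaEquivProd _ _).symm.trans (.sigmaCongrRight byPoint)).trans <|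
      swapOrder.trans <| (Equiv.sigmaCongrRight byElement).symm.trans (.sigmaEquivProd _ _)

theorem isGassmannEquivalent_stabilizer [Finite X] [IsPretransitive G X] [IsPretransitive G Y]
    (hfix : ∀ a : G, Nat.card (fixedBy X a) = Nat.card (fixedBy Y a)) (x : X) (y : Y) :
    IsGassmannEquivalent (stabilizer G x) (stabilizer G y) := by
  intro c
  have hcard : Nat.card X = Nat.card Y := by simpa using hfix 1
  have : Nonempty X := ⟨x⟩
  refine Nat.eq_of_mul_eq_mul_left (Nat.card_pos (α := X)) ?_
  rw [card_mul_card_stabilizer_inter_conjugatesOf, hfix, hcard,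
    card_mul_card_stabilizer_inter_conjugatesOf]

theorem exists_stabilizer_eq_of_map_conj_eq {x : X} {y : Y} {t : G}
    (h : (stabilizer G x).map (MulAut.conj t).toMonoidHom = stabilizer G y) :
    ∃ z : Y, stabilizer G x = stabilizer G z := by
  refine ⟨t⁻¹ • y, ?_⟩
  rw [stabilizer_smul_eq_stabilizer_map_conj, ← h, ← stabilizer_smul_eq_stabilizer_map_conj,
    ← stabilizer_smul_eq_stabilizer_map_conj, inv_smul_smul]

end Gassmann

/-- The fixed-point case of Brauer's permutation lemma: the invertible matrix `M` conjugates the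
permutation matrices of `σ` and `τ` into each other, so these have the same trace. -/
theorem ncard_fixedPoints_eq_of_matrix_invariant {m n R : Type*} [Fintype m] [Fintype n]
    [DecidableEq m] [DecidableEq n] [CommSemiring R] [CharZero R]
    {M : Matrix m n R} {N : Matrix n m R} (hMN : M * N = 1) (hNM : N * M = 1)
    {σ : Perm m} {τ : Perm n} (h : ∀ x y, M (σ x) (τ y) = M x y) :
    (Function.fixedPoints σ).ncard = (Function.fixedPoints τ).ncard := by
  have intertwine : σ.permMatrix R * M = M * τ.permMatrix R := by
    rw [PEquiv.toMatrix_toPEquiv_mul, PEquiv.mul_toMatrix_toPEquiv]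
    ext x y
    simpa using h x (τ.symm y)
  have trace_eq : trace (σ.permMatrix R) = trace (τ.permMatrix R) :=
    calc trace (σ.permMatrix R) = trace (σ.permMatrix R * M * N) := by
          rw [Matrix.mul_assoc, hMN, Matrix.mul_one]
      _ = trace (N * M * τ.permMatrix R) := by
          rw [intertwine, trace_mul_comm, ← Matrix.mul_assoc]
      _ = trace (τ.permMatrix R) := by rw [hNM, Matrix.one_mul]
  simpa only [trace_permutation, Nat.cast_inj] using trace_eq

section Plane

/-- The points of the projective plane of order 3, permuted by the first coordinate of `G₀`. A
separate type from `Line`, so that `G₀` can act differently on the two. -/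
def Point : Type := Fin 13

/-- The lines of the projective plane of order 3, permuted by the second coordinate of `G₀`. -/
def Line : Type := Fin 13

instance : Fintype Point := inferInstanceAs (Fintype (Fin 13))

instance : DecidableEq Point := inferInstanceAs (DecidableEq (Fin 13))

instance : Fintype Line := inferInstanceAs (Fintype (Fin 13))

instance : DecidableEq Line := inferInstanceAs (DecidableEq (Fin 13))

instance : MulAction G₀ Point :=
  MulAction.compHom (Fin 13) ((MonoidHom.fst (Perm (Fin 13)) (Perm (Fin 13))).comp G₀.subtype)

instance : MulAction G₀ Line :=
  MulAction.compHom (Fin 13) ((MonoidHom.snd (Perm (Fin 13)) (Perm (Fin 13))).comp G₀.subtype)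

/-- The point numbered `0`, of which `A` is the stabilizer. -/
def basePoint : Point := (0 : Fin 13)

/-- The line numbered `0`, of which `B` is the stabilizer. -/
def baseLine : Line := (0 : Fin 13)

/-- Incidence in the projective plane of order 3. The nonzero residues modulo 13 are each a
difference of two elements of `{0, 1, 3, 9}` in exactly one way; lines are numbered with the sign
that makes the relation symmetric. -/
def Incident : Point → Line → Prop := fun (x y : Fin 13) => x + y ∈ ({0, 1, 3, 9} : Finset (Fin 13))

instance (x : Point) (l : Line) : Decidable (Incident x l) :=
  inferInstanceAs (Decidable (_ ∈ ({0, 1, 3, 9} : Finset (Fin 13))))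

theorem stabilizer_basePoint : stabilizer G₀ basePoint = A := rfl

theorem stabilizer_baseLine : stabilizer G₀ baseLine = B := rfl

theorem incident_smul_smul_iff (a : G₀) (x : Point) (l : Line) :
    Incident (a • x) (a • l) ↔ Incident x l := by
  obtain ⟨p, hp⟩ := a
  induction hp using Subgroup.closure_induction generalizing x l with
  | mem p hp =>
    revert x l
    rcases hp with rfl | rfl | rfl <;> decide +kernel
  | one => rfl
  | mul p q hp hq ihp ihq =>
    let a : G₀ := ⟨p, hp⟩
    let b : G₀ := ⟨q, hq⟩
    change Incident ((a * b) • x) ((a * b) • l) ↔ _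
    rw [mul_smul, mul_smul]
    exact (ihp (b • x) (b • l)).trans (ihq x l)
  | inv p hp ihp =>
    let a : G₀ := ⟨p, hp⟩
    change Incident (a⁻¹ • x) (a⁻¹ • l) ↔ _
    simpa only [a, smul_inv_smul] using (ihp (a⁻¹ • x) (a⁻¹ • l)).symm

/-- The incidence matrix of the plane, over `ℚ` so that it has an inverse. -/
def incidenceMatrix : Matrix Point Line ℚ := of fun x l => if Incident x l then 1 else 0

/-- The inverse `(Mᵀ - J / 4) / 3` of the incidence matrix `M`, where `J` is the all-ones matrix.
The formula comes from `M * Mᵀ = 3 + J` and `M * J = 4 J`. -/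
def incidenceMatrixInv : Matrix Line Point ℚ :=
  of fun l x => if Incident x l then 1 / 4 else -1 / 12

theorem incidenceMatrix_mul_inv :
    incidenceMatrix * incidenceMatrixInv = (1 : Matrix Point Point ℚ) := by
  decide +kernel

theorem incidenceMatrixInv_mul :
    incidenceMatrixInv * incidenceMatrix = (1 : Matrix Line Line ℚ) :=
  (mul_eq_one_comm_of_card_eq _ _ _ rfl).1 incidenceMatrix_mul_inv

theorem card_fixedBy_point_eq_line (a : G₀) :
    Nat.card (fixedBy Point a) = Nat.card (fixedBy Line a) :=
  ncard_fixedPoints_eq_of_matrix_invariant incidenceMatrix_mul_inv incidenceMatrixInv_mul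
    (σ := toPerm a) (τ := toPerm a) fun x l => by
      simp only [incidenceMatrix, of_apply, toPerm_apply, incident_smul_smul_iff]

/-- The generator `(g, g')` as an element of `G₀`. -/
def genG : G₀ := ⟨(g, g'), Subgroup.subset_closure (by simp)⟩

/-- The generator `(h, h')` as an element of `G₀`. -/
def genH : G₀ := ⟨(h, h'), Subgroup.subset_closure (by simp)⟩

/-- The generator `(i, i')` as an element of `G₀`. -/
def genI : G₀ := ⟨(i, i'), Subgroup.subset_closure (by simp)⟩

/-- A Singer cycle: a collineation permuting the points, and the lines, in a single 13-cycle. -/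
def singerCycle : G₀ := genG * genH * genI

instance : IsPretransitive G₀ Point :=
  have cyclic : ∀ x : Point, ∃ n : Fin 13, singerCycle ^ (n : ℕ) • basePoint = x := by
    decide +kernel
  (isPretransitive_iff_base basePoint).2 fun x =>
    (cyclic x).imp' (fun n : Fin 13 => singerCycle ^ (n : ℕ)) fun _ => id

instance : IsPretransitive G₀ Line :=
  have cyclic : ∀ l : Line, ∃ n : Fin 13, singerCycle ^ (n : ℕ) • baseLine = l := by
    decide +kernel
  (isPretransitive_iff_base baseLine).2 fun l =>
    (cyclic l).imp' (fun n : Fin 13 => singerCycle ^ (n : ℕ)) fun _ => id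

theorem not_stabilizer_basePoint_le (l : Line) :
    ¬ stabilizer G₀ basePoint ≤ stabilizer G₀ l := by
  -- `a` fixes exactly the lines 0, 4, 8, 9, 11, and `b` exactly the lines 1, 3.
  let a : G₀ := genG * genI * genH * genI * genG
  let b : G₀ := genG * genH * genI * genG * genH * genG
  have ha : a • basePoint = basePoint := by decide +kernel
  have hb : b • basePoint = basePoint := by decide +kernel
  have no_common_line : ∀ l : Line, ¬ (a • l = l ∧ b • l = l) := by decide +kernel
  exact fun hle => no_common_line l ⟨hle ha, hle hb⟩

end Plane

/-- Every element of `G₀` has equally many fixed points in its two coordinates; the point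
stabilizers `A` and `B` are Gassmann equivalent of index 13, but not conjugate. -/
theorem fixed_gassmann_not_conjugate :
    (∀ p ∈ G₀, Nat.card {x : Fin 13 // p.1 x = x} = Nat.card {x : Fin 13 // p.2 x = x}) ∧
    (∀ g : G₀,
      Nat.card ((A : Set G₀) ∩ {x : G₀ | IsConj g x} : Set G₀) =
      Nat.card ((B : Set G₀) ∩ {x : G₀ | IsConj g x} : Set G₀)) ∧
    A.index = 13 ∧ B.index = 13 ∧
    ¬ ∃ x : G₀, Subgroup.map (MulAut.conj x).toMonoidHom A = B := by
  refine ⟨fun p hp => card_fixedBy_point_eq_line ⟨p, hp⟩, ?gassmann, ?indexA, ?indexB, ?not_conj⟩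
  case gassmann =>
    exact isGassmannEquivalent_stabilizer card_fixedBy_point_eq_line basePoint baseLine
  case indexA =>
    rw [← stabilizer_basePoint, index_stabilizer_of_transitive]
    exact Nat.card_fin 13
  case indexB =>
    rw [← stabilizer_baseLine, index_stabilizer_of_transitive]
    exact Nat.card_fin 13
  case not_conj =>
    rintro ⟨t, ht⟩
    obtain ⟨l, hl⟩ := exists_stabilizer_eq_of_map_conj_eq (x := basePoint) (y := baseLine) ht
    exact not_stabilizer_basePoint_le l hl.le
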